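/- The class of cographs is exactly the smallest class of finite simple graphs that contains the one-vertex graph and is closed under complementation and under disjoint union. That is, a finite graph G is a cograph if and only if G belongs to every class of graphs (closed under graph isomorphism) that contains the one-vertex graph and is closed under taking complements and under taking disjoint unions of two of its members. -/

import Mathlib

/-- A graph is a cograph if it has no induced subgraph isomorphic to `P₄`,
the path on four vertices. Graph embeddings capture induced subgraphs. -/
def IsCograph {V : Type*} (G : SimpleGraph V) : Prop :=
  IsEmpty (SimpleGraph.pathGraph 4 ↪g G)

open SimpleGraph

/-- Distinctness of the four vertices of an induced `P₄` follows from the adjacency conditions. -/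
theorem isCograph_iff_forall_adj {V : Type*} (G : SimpleGraph V) :
    IsCograph G ↔ ∀ a b c d, G.Adj a b → G.Adj b c → G.Adj c d →
      G.Adj a c ∨ G.Adj a d ∨ G.Adj b d := by
  constructor
  · intro h a b c d hab hbc hcd
    by_contra! hn
    obtain ⟨hac, had, hbd⟩ := hn
    have hac' : a ≠ c := by rintro rfl; exact had hcd
    have had' : a ≠ d := by rintro rfl; exact hac hcd.symm
    have hbd' : b ≠ d := by rintro rfl; exact had hab
    refine h.false ⟨⟨![a, b, c, d], ?_⟩, ?_⟩
    · intro i j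
      fin_cases i <;> fin_cases j <;>
        simp [hab.ne, hbc.ne, hcd.ne, hac', had', hbd', hab.ne', hbc.ne', hcd.ne', hac'.symm,
          had'.symm, hbd'.symm]
    · intro i j
      change G.Adj (![a, b, c, d] i) (![a, b, c, d] j) ↔ (pathGraph 4).Adj i j
      fin_cases i <;> fin_cases j <;>
        simp [pathGraph_adj, hab, hbc, hcd, hac, had, hbd, hab.symm, hbc.symm, hcd.symm,
          G.adj_comm c a, G.adj_comm d a, G.adj_comm d b]
  · intro h
    refine ⟨fun f ↦ ?_⟩
    have := h (f 0) (f 1) (f 2) (f 3)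
    simp [pathGraph_adj] at this

namespace IsCograph

theorem of_embedding {V W : Type*} {G : SimpleGraph V} {H : SimpleGraph W} (h : IsCograph H)
    (f : G ↪g H) : IsCograph G :=
  ⟨fun g ↦ h.false (g.trans f)⟩

theorem compl {V : Type*} {G : SimpleGraph V} (h : IsCograph G) : IsCograph Gᶜ := by
  rw [isCograph_iff_forall_adj] at h ⊢
  intro a b c d hab hbc hcd
  have := h b d a c
  simp only [compl_adj] at *
  grind [G.adj_comm]

theorem sum {V W : Type*} {G : SimpleGraph V} {H : SimpleGraph W} (hG : IsCograph G)
    (hH : IsCograph H) : IsCograph (G ⊕g H) := by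
  rw [isCograph_iff_forall_adj] at *
  rintro (a | a) (b | b) (c | c) (d | d) <;> simp <;> grind

end IsCograph

/-- `S` splits into two nonempty parts with no edge of `G` between them. -/
def HasSeparation {V : Type*} (G : SimpleGraph V) (S : Set V) : Prop :=
  ∃ A ⊆ S, A.Nonempty ∧ (S \ A).Nonempty ∧ ∀ a ∈ A, ∀ b ∈ S \ A, ¬ G.Adj a b

theorem HasSeparation.insert {V : Type*} {G : SimpleGraph V} {S : Set V} (hG : IsCograph G)
    (h : HasSeparation G S) {v : V} (hv : v ∉ S) :
    HasSeparation G (insert v S) ∨ HasSeparation Gᶜ (insert v S) := by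
  rw [isCograph_iff_forall_adj] at hG
  by_contra! hn
  obtain ⟨hn, hnc⟩ := hn
  -- A part of `S` without edges to the rest of `S` contains a neighbour of `v`.
  have key : ∀ C ⊆ S, C.Nonempty → (∀ a ∈ C, ∀ b ∈ S \ C, ¬ G.Adj a b) →
      ∃ x ∈ C, G.Adj v x := by
    intro C hCS hC hsep
    by_contra! hx
    refine hn ⟨C, hCS.trans (Set.subset_insert v S), hC, ⟨v, by simp, fun h ↦ hv (hCS h)⟩, ?_⟩
    rintro a ha b ⟨rfl | hb, hbC⟩
    · exact fun hab ↦ hx a ha hab.symm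
    · exact hsep a ha b ⟨hb, hbC⟩
  obtain ⟨A, hAS, hA, hB, hAB⟩ := h
  obtain ⟨y, hyS, hvy⟩ : ∃ y ∈ S, ¬ G.Adj v y := by
    by_contra! hy
    refine hnc ⟨{v}, by simp, by simp, ?_, ?_⟩
    · obtain ⟨a, ha⟩ := hA
      exact ⟨a, by simp [hAS ha], by rintro rfl; exact hv (hAS ha)⟩
    · rintro a rfl b ⟨rfl | hb, hba⟩
      · exact absurd rfl hba
      · simp [hy b hb]
  -- The component of `y` in the subgraph induced on `S`.
  let C : Set V := {w | Relation.ReflTransGen (fun a b ↦ G.Adj a b ∧ b ∈ S) y w}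
  have hyC : y ∈ C := .refl
  have hCsub : ∀ T ⊆ S, y ∈ T → (∀ a ∈ T, ∀ b ∈ S \ T, ¬ G.Adj a b) → C ⊆ T := by
    intro T hTS hyT hT w hw
    induction hw with
    | refl => exact hyT
    | tail _ h ih => by_contra hc; exact hT _ ih _ ⟨h.2, hc⟩ h.1
  have hCS : C ⊆ S := hCsub S subset_rfl hyS (by simp)
  have hCsep : ∀ a ∈ C, ∀ b ∈ S \ C, ¬ G.Adj a b :=
    fun a ha b hb hab ↦ hb.2 (.tail ha ⟨hab, hb.1⟩)
  have hSC : (S \ C).Nonempty := by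
    by_cases hyA : y ∈ A
    · exact hB.mono (Set.sdiff_subset_sdiff_right (hCsub A hAS hyA hAB))
    · have hCB : C ⊆ S \ A := hCsub _ Set.sdiff_subset ⟨hyS, hyA⟩ fun a ha b hb hab ↦
        hAB b (by simpa [hb.1] using hb.2) a ha hab.symm
      obtain ⟨a, ha⟩ := hA
      exact ⟨a, hAS ha, fun h ↦ (hCB h).2 ha⟩
  obtain ⟨z, ⟨hzS, hzC⟩, hvz⟩ := key (S \ C) Set.sdiff_subset hSC fun a ha b hb hab ↦
    hCsep b (by simpa [hb.1] using hb.2) a ha hab.symm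
  obtain ⟨x, hxC, hvx⟩ := key C hCS ⟨y, hyC⟩ hCsep
  obtain ⟨p, hpC, q, hqC, hpq, hvp, hvq⟩ :
      ∃ p ∈ C, ∃ q ∈ C, G.Adj p q ∧ ¬ G.Adj v p ∧ G.Adj v q := by
    by_contra! hpq
    suffices ∀ w ∈ C, ¬ G.Adj v w from this x hxC hvx
    intro w hw
    induction hw with
    | refl => exact hvy
    | tail h h' ih => exact hpq _ h _ (.tail h h') h'.1 ih
  rcases hG p q v z hpq hvq.symm hvz with h | h | h
  · exact hvp h.symm
  · exact hCsep p hpC z ⟨hzS, hzC⟩ h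
  · exact hCsep q hqC z ⟨hzS, hzC⟩ h

theorem IsCograph.hasSeparation_or_compl {V : Type*} {G : SimpleGraph V} (hG : IsCograph G)
    {S : Set V} (hfin : S.Finite) (hS : S.Nontrivial) :
    HasSeparation G S ∨ HasSeparation Gᶜ S := by
  induction S, hfin using Set.Finite.induction_on with
  | empty => simp at hS
  | @insert v S hv hfin ih =>
    by_cases hS' : S.Nontrivial
    · rcases ih hS' with h | h
      · exact h.insert hG hv
      · simpa [or_comm] using h.insert hG.compl hv
    · obtain ⟨w, rfl⟩ : ∃ w, S = {w} := by
        rcases (Set.not_nontrivial_iff.mp hS').eq_empty_or_singleton with rfl | h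
        · simp at hS
        · exact h
      have hvw : v ≠ w := by simpa using hv
      have hsep (H : SimpleGraph V) (h : ¬ H.Adj v w) : HasSeparation H {v, w} := by
        refine ⟨{v}, by simp, by simp, ⟨w, by simp [hvw.symm]⟩, ?_⟩
        rintro a rfl b ⟨rfl | rfl, hb⟩
        · exact absurd rfl hb
        · exact h
      by_cases h : G.Adj v w
      · exact .inr (hsep _ (by simp [h]))
      · exact .inl (hsep _ h)

/-- A graph is the disjoint union of the subgraphs induced on a set and its complement if there
are no edges between them. -/
noncomputable def SimpleGraph.induceSumInduceComplIso {V : Type*} (G : SimpleGraph V) (A : Set V)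
    (h : ∀ a ∈ A, ∀ b ∉ A, ¬ G.Adj a b) : G.induce A ⊕g G.induce Aᶜ ≃g G where
  toEquiv := by classical exact Equiv.Set.sumCompl A
  map_rel_iff' := by
    rintro (⟨a, ha⟩ | ⟨a, ha⟩) (⟨b, hb⟩ | ⟨b, hb⟩)
    · simp
    · simpa using h a ha b hb
    · simpa [G.adj_comm] using h b hb a ha
    · simp

/-- A (nonempty) finite simple graph `G` is a cograph if and only if `G` belongs to every
class of finite graphs that is closed under isomorphism, contains the one-vertex graph,
and is closed under complementation and under disjoint unions. -/
theorem cograph_iff_mem_closure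
    {V : Type} [Fintype V] [Nonempty V] (G : SimpleGraph V) :
    IsCograph G ↔
      ∀ P : ∀ (α : Type) [Fintype α], SimpleGraph α → Prop,
        (∀ (α : Type) [Fintype α] (β : Type) [Fintype β]
            (G₁ : SimpleGraph α) (G₂ : SimpleGraph β),
            Nonempty (G₁ ≃g G₂) → P α G₁ → P β G₂) →
        P (Fin 1) ⊥ →
        (∀ (α : Type) [Fintype α] (G₁ : SimpleGraph α), P α G₁ → P α G₁ᶜ) →
        (∀ (α : Type) [Fintype α] (β : Type) [Fintype β]
            (G₁ : SimpleGraph α) (G₂ : SimpleGraph β),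
            P α G₁ → P β G₂ → P (α ⊕ β) (G₁ ⊕g G₂)) →
        P V G := by
  constructor
  · intro hG P hiso hone hcompl hsum
    induction hn : Fintype.card V using Nat.strong_induction_on generalizing V with
    | _ n ih =>
      subst hn
      have of_separation (H : SimpleGraph V) (hH : IsCograph H)
          (h : HasSeparation H Set.univ) : P V H := by
        classical
        obtain ⟨A, -, ⟨a, ha⟩, ⟨b, -, hb⟩, hsep⟩ := h
        have : Nonempty A := ⟨⟨a, ha⟩⟩
        have : Nonempty (Aᶜ : Set V) := ⟨⟨b, hb⟩⟩
        refine hiso _ _ _ _ ⟨H.induceSumInduceComplIso A fun a ha b hb ↦ hsep a ha b (by simpa)⟩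
          (hsum _ _ _ _ (ih _ ?_ _ (hH.of_embedding (Embedding.induce _)) rfl)
            (ih _ ?_ _ (hH.of_embedding (Embedding.induce _)) rfl))
        · exact Fintype.card_subtype_lt hb
        · exact Fintype.card_subtype_lt (x := a) (by simpa using ha)
      rcases subsingleton_or_nontrivial V with hV | hV
      · obtain ⟨_⟩ := nonempty_unique V
        refine hiso _ _ _ _ ⟨⟨Equiv.ofUnique (Fin 1) V, ?_⟩⟩ hone
        intro a b
        simp [Subsingleton.elim a b]
      · rcases hG.hasSeparation_or_compl Set.finite_univ Set.nontrivial_univ with h | h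
        · exact of_separation G hG h
        · simpa using hcompl _ _ (of_separation Gᶜ hG.compl h)
  · intro h
    refine h (fun α _ H ↦ IsCograph H) ?_ ?_ ?_ ?_
    · rintro α _ β _ G₁ G₂ ⟨e⟩ hG
      exact hG.of_embedding e.symm.toEmbedding
    · simp [isCograph_iff_forall_adj]
    · intro α _ G₁ hG
      exact hG.compl
    · intro α _ β _ G₁ G₂ h₁ h₂
      exact h₁.sum h₂
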